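/- arXiv:2105.06098 — 2 statements merged into one kernel-verified Lean document; each statement's English description precedes it below -/
import Mathlib

section
/- Let q : ℝ×ℝ → ℂ be smooth. Then q satisfies the TOFKN equation q_t + q_{xxx} − 3i(|q|²q_x)_x − (3/2)(|q|⁴q)_x = 0 at every point (x,t) if and only if for every λ ∈ ℂ and every (x,t) ∈ ℝ×ℝ the zero-curvature (compatibility) equation ∂_t X(λ;x,t) − ∂_x T(λ;x,t) + X(λ;x,t)·T(λ;x,t) − T(λ;x,t)·X(λ;x,t) = 0 holds as an identity of 2×2 complex matrices. -/
noncomputable section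

open Complex Matrix MeasureTheory ComplexConjugate Filter

abbrev Mat2 : Type := Matrix (Fin 2) (Fin 2) ℂ

/-- Partial derivative in the first (space) variable of a function on `ℝ × ℝ`. -/
def px (f : ℝ × ℝ → ℂ) : ℝ × ℝ → ℂ := fun p => deriv (fun y => f (y, p.2)) p.1

/-- Partial derivative in the second (time) variable of a function on `ℝ × ℝ`. -/
def pt (f : ℝ × ℝ → ℂ) : ℝ × ℝ → ℂ := fun p => deriv (fun s => f (p.1, s)) p.2

/-- Entrywise partial derivative in `x` of a matrix-valued function. -/
def DxM (M : ℝ × ℝ → Mat2) : ℝ × ℝ → Mat2 :=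
  fun p => Matrix.of fun i j => deriv (fun y => M (y, p.2) i j) p.1

/-- Entrywise partial derivative in `t` of a matrix-valued function. -/
def DtM (M : ℝ × ℝ → Mat2) : ℝ × ℝ → Mat2 :=
  fun p => Matrix.of fun i j => deriv (fun s => M (p.1, s) i j) p.2

def sigma1 : Mat2 := !![0, 1; 1, 0]
def sigma2 : Mat2 := !![0, -Complex.I; Complex.I, 0]
def sigma3 : Mat2 := !![1, 0; 0, -1]

/-- The potential matrix `Q`. -/
def Qmat (q : ℝ × ℝ → ℂ) : ℝ × ℝ → Mat2 := fun p => !![0, q p; -conj (q p), 0]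

/-- `|q|² = q ⬝ conj q`. -/
def msq (q : ℝ × ℝ → ℂ) : ℝ × ℝ → ℂ := fun p => q p * conj (q p)

/-- The `x`-part Lax matrix `X(λ; x, t) = iλ²σ₃ + λQ`. -/
def Xmat (q : ℝ × ℝ → ℂ) (l : ℂ) : ℝ × ℝ → Mat2 :=
  fun p => (Complex.I * l ^ 2) • sigma3 + l • Qmat q p

/-- The `t`-part Lax matrix `T(λ; x, t)`. -/
def Tmat (q : ℝ × ℝ → ℂ) (l : ℂ) : ℝ × ℝ → Mat2 := fun p =>
  (4 * l ^ 4 + (3 / 2) * (msq q p) ^ 2 - 2 * l ^ 2 * msq q p) • Xmat q l p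
    + (-2 * Complex.I * l ^ 3 + 3 * Complex.I * l * msq q p) • (sigma3 * DxM (Qmat q) p)
    - (l ^ 2 * (px q p * conj (q p) - q p * px (fun p' => conj (q p')) p)) • sigma3
    - l • DxM (DxM (Qmat q)) p

/-- The third-order flow Kaup–Newell equation
`q_t + q_{xxx} − 3i(|q|²q_x)_x − (3/2)(|q|⁴q)_x = 0`. -/
def TOFKN (q : ℝ × ℝ → ℂ) : Prop :=
  ∀ p : ℝ × ℝ,
    pt q p + px (px (px q)) p
      - 3 * Complex.I * px (fun p' => msq q p' * px q p') p
      - (3 / 2) * px (fun p' => (msq q p') ^ 2 * q p') p = 0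

/-! The zero-curvature expression is a polynomial in `λ`. Since `Q` anticommutes with `σ₃`, and
since `[Q, Q_x]` and `[Q, σ₃ Q_x]` are multiples of `σ₃` by `q_x q̄ - q q̄_x` and `(|q|²)_x`, the
coefficients of `λ²`, `λ⁴` and `λ⁵` cancel term by term, and that of `λ³` cancels because
`(|q|²)_x Q + (q_x q̄ - q q̄_x) σ₃ Q = 2 |q|² Q_x`. What is left is `λ` times the off-diagonal
matrix built from the left-hand side of the TOFKN equation. -/

/-- The off-diagonal skew-Hermitian matrix with upper right entry `z`, as a real-linear function of
`z`. It turns scalar equations for `q` into matrix equations: the potential `Q` is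
`offDiag ∘ q`. -/
def offDiag : ℂ →ₗ[ℝ] Mat2 where
  toFun z := !![0, z; -conj z, 0]
  map_add' z w := by simp [add_comm]
  map_smul' c z := by simp

/-- The symmetric real pairing `2 Re (w z̄)`. Its value at `(q, q_x)` is `(|q|²)_x`. -/
def symmPairing (z w : ℂ) : ℂ := w * conj z + z * conj w

/-- The alternating pairing `2i Im (w z̄)`. Its value at `(q, q_x)` is the coefficient
`q_x q̄ - q q̄_x` in the Lax matrix `T`. -/
def altPairing (z w : ℂ) : ℂ := w * conj z - z * conj w

section Algebra

attribute [local instance] LieRing.ofAssociativeRing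

lemma offDiag_apply (z : ℂ) : offDiag z = !![0, z; -conj z, 0] := rfl

lemma sigma3_mul_offDiag (z : ℂ) : sigma3 * offDiag z = !![0, z; conj z, 0] := by
  simp [offDiag_apply, sigma3]

lemma offDiag_eq_zero {z : ℂ} : offDiag z = 0 ↔ z = 0 := by
  refine ⟨fun h => congrFun (congrFun h 0) 1, ?_⟩
  rintro rfl
  exact map_zero offDiag

lemma offDiag_mul_of_conj_eq {c : ℂ} (hc : conj c = c) (z : ℂ) :
    offDiag (c * z) = c • offDiag z := by
  simp [offDiag_apply, hc]

lemma offDiag_I_mul (z : ℂ) : offDiag (I * z) = I • (sigma3 * offDiag z) := by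
  rw [sigma3_mul_offDiag]
  simp [offDiag_apply]

lemma lie_sigma3_offDiag (z : ℂ) : ⁅sigma3, offDiag z⁆ = (2 : ℂ) • (sigma3 * offDiag z) := by
  have anticomm : offDiag z * sigma3 = -(sigma3 * offDiag z) := by
    rw [sigma3_mul_offDiag]
    simp [offDiag_apply, sigma3]
  rw [Ring.lie_def, anticomm, sub_neg_eq_add, two_smul]

lemma lie_sigma3_sigma3_mul_offDiag (z : ℂ) :
    ⁅sigma3, sigma3 * offDiag z⁆ = (2 : ℂ) • offDiag z := by
  simp [Ring.lie_def, offDiag_apply, sigma3, two_mul, sub_eq_add_neg]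

lemma lie_offDiag_offDiag (z w : ℂ) :
    ⁅offDiag z, offDiag w⁆ = altPairing z w • sigma3 := by
  simp [Ring.lie_def, offDiag_apply, sigma3, altPairing, mul_comm, sub_eq_add_neg, add_comm]

lemma lie_offDiag_sigma3_mul_offDiag (z w : ℂ) :
    ⁅offDiag z, sigma3 * offDiag w⁆ = symmPairing z w • sigma3 := by
  simp [Ring.lie_def, offDiag_apply, sigma3, symmPairing, mul_comm, sub_eq_add_neg, add_comm]

lemma altPairing_self (z : ℂ) : altPairing z z = 0 := sub_self _

lemma conj_symmPairing (z w : ℂ) : conj (symmPairing z w) = symmPairing z w := by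
  simp [symmPairing, mul_comm, add_comm]

lemma symmPairing_smul_add_altPairing_smul (z w : ℂ) :
    symmPairing z w • offDiag z + altPairing z w • (sigma3 * offDiag z) =
      (2 * (z * conj z)) • offDiag w := by
  have upper : symmPairing z w * z + altPairing z w * z = 2 * (z * conj z) * w := by
    rw [symmPairing, altPairing]
    ring
  have lower : -(symmPairing z w * conj z) + altPairing z w * conj z =
      -(2 * (z * conj z) * conj w) := by
    rw [symmPairing, altPairing]
    ring
  rw [sigma3_mul_offDiag]
  simp [offDiag_apply, upper, lower]

lemma conj_msq (q : ℝ × ℝ → ℂ) (p : ℝ × ℝ) : conj (msq q p) = msq q p := by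
  simp [msq, mul_comm]

lemma Xmat_apply (q : ℝ × ℝ → ℂ) (l : ℂ) (p : ℝ × ℝ) :
    Xmat q l p = (I * l ^ 2) • sigma3 + l • offDiag (q p) := rfl

lemma px_conj (q : ℝ × ℝ → ℂ) (p : ℝ × ℝ) : px (fun p' => conj (q p')) p = conj (px q p) :=
  deriv.star ..

lemma DxM_Qmat (q : ℝ × ℝ → ℂ) : DxM (Qmat q) = Qmat (px q) := by
  ext p i j
  fin_cases i <;> fin_cases j
  · exact deriv_const ..
  · rfl
  · exact (deriv.fun_neg ..).trans (congrArg Neg.neg (px_conj q p))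
  · exact deriv_const ..

lemma Tmat_apply (q : ℝ × ℝ → ℂ) (l : ℂ) (p : ℝ × ℝ) :
    Tmat q l p =
      (4 * l ^ 4 + (3 / 2) * msq q p ^ 2 - 2 * l ^ 2 * msq q p) • Xmat q l p
        + (-2 * I * l ^ 3 + 3 * I * l * msq q p) • (sigma3 * offDiag (px q p))
        - (l ^ 2 * altPairing (q p) (px q p)) • sigma3
        - l • offDiag (px (px q) p) := by
  simp only [Tmat, DxM_Qmat, px_conj]
  rfl

lemma lie_Xmat_Tmat (q : ℝ × ℝ → ℂ) (l : ℂ) (p : ℝ × ℝ) :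
    ⁅Xmat q l p, Tmat q l p⁆ =
      (-2 * I * l ^ 3 + 3 * I * l * msq q p) •
          ((2 * I * l ^ 2) • offDiag (px q p) + (l * symmPairing (q p) (px q p)) • sigma3)
        + (2 * l ^ 3 * altPairing (q p) (px q p)) • (sigma3 * offDiag (q p))
        - (2 * I * l ^ 3) • (sigma3 * offDiag (px (px q) p))
        - (l ^ 2 * altPairing (q p) (px (px q) p)) • sigma3 := by
  have lie_Xmat (A : Mat2) :
      ⁅Xmat q l p, A⁆ = (I * l ^ 2) • ⁅sigma3, A⁆ + l • ⁅offDiag (q p), A⁆ := by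
    rw [Xmat_apply, add_lie, smul_lie, smul_lie]
  have lie_Xmat_sigma3 : ⁅Xmat q l p, sigma3⁆ = -(2 * l) • (sigma3 * offDiag (q p)) := by
    rw [lie_Xmat, lie_self, ← lie_skew, lie_sigma3_offDiag]
    module
  rw [Tmat_apply, lie_sub, lie_sub, lie_add, lie_smul, lie_smul, lie_smul, lie_smul, lie_self,
    lie_Xmat_sigma3, lie_Xmat, lie_Xmat, lie_sigma3_sigma3_mul_offDiag,
    lie_offDiag_sigma3_mul_offDiag, lie_sigma3_offDiag, lie_offDiag_offDiag]
  module

end Algebra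

section Derivatives

open scoped Matrix.Norms.Operator

lemma hasDerivAt_offDiag {f : ℝ → ℂ} {f' : ℂ} {x : ℝ} (hf : HasDerivAt f f' x) :
    HasDerivAt (fun y => offDiag (f y)) (offDiag f') x :=
  offDiag.toContinuousLinearMap.hasFDerivAt.comp_hasDerivAt x hf

lemma hasDerivAt_mul_conj_self {f : ℝ → ℂ} {f' : ℂ} {x : ℝ} (hf : HasDerivAt f f' x) :
    HasDerivAt (fun y => f y * conj (f y)) (symmPairing (f x) f') x :=
  hf.mul hf.star

lemma hasDerivAt_altPairing {f g : ℝ → ℂ} {f' g' : ℂ} {x : ℝ} (hf : HasDerivAt f f' x)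
    (hg : HasDerivAt g g' x) :
    HasDerivAt (fun y => altPairing (f y) (g y)) (altPairing f' (g x) + altPairing (f x) g') x := by
  refine ((hg.mul hf.star).sub (hf.mul hg.star)).congr_deriv ?_
  simp only [altPairing, starRingEnd_apply]
  ring

lemma hasDerivAt_Xmat {q : ℝ × ℝ → ℂ} {γ : ℝ → ℝ × ℝ} {s : ℝ} {q' : ℂ} (l : ℂ)
    (h : HasDerivAt (fun r => q (γ r)) q' s) :
    HasDerivAt (fun r => Xmat q l (γ r)) (l • offDiag q') s :=
  ((hasDerivAt_offDiag h).const_smul l).const_add _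

lemma DxM_eq_of_hasDerivAt {M : ℝ × ℝ → Mat2} {M' : Mat2} {x t : ℝ}
    (h : HasDerivAt (fun y => M (y, t)) M' x) : DxM M (x, t) = M' := by
  ext i j
  exact (hasDerivAt_pi.1 (hasDerivAt_pi.1 h i) j).deriv

lemma DtM_eq_of_hasDerivAt {M : ℝ × ℝ → Mat2} {M' : Mat2} {x t : ℝ}
    (h : HasDerivAt (fun s => M (x, s)) M' t) : DtM M (x, t) = M' := by
  ext i j
  exact (hasDerivAt_pi.1 (hasDerivAt_pi.1 h i) j).deriv

lemma contDiff_px {f : ℝ × ℝ → ℂ} {t : ℝ} {n : WithTop ℕ∞}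
    (hf : ContDiff ℝ (n + 1) fun x => f (x, t)) : ContDiff ℝ n fun x => px f (x, t) :=
  (contDiff_succ_iff_deriv.1 hf).2.2

variable {q : ℝ × ℝ → ℂ} {x t : ℝ}

lemma hasDerivAt_px (hq : DifferentiableAt ℝ (fun y => q (y, t)) x) :
    HasDerivAt (fun y => q (y, t)) (px q (x, t)) x :=
  hq.hasDerivAt

lemma hasDerivAt_msq (hq : DifferentiableAt ℝ (fun y => q (y, t)) x) :
    HasDerivAt (fun y => msq q (y, t)) (symmPairing (q (x, t)) (px q (x, t))) x :=
  hasDerivAt_mul_conj_self (hasDerivAt_px hq)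

lemma DtM_Xmat (l : ℂ) (hq : DifferentiableAt ℝ (fun s => q (x, s)) t) :
    DtM (Xmat q l) (x, t) = l • offDiag (pt q (x, t)) :=
  DtM_eq_of_hasDerivAt (hasDerivAt_Xmat l hq.hasDerivAt)

lemma DxM_Tmat (l : ℂ) (hq : DifferentiableAt ℝ (fun y => q (y, t)) x)
    (hqx : DifferentiableAt ℝ (fun y => px q (y, t)) x)
    (hqxx : DifferentiableAt ℝ (fun y => px (px q) (y, t)) x) :
    DxM (Tmat q l) (x, t) =
      (4 * l ^ 4 + (3 / 2) * msq q (x, t) ^ 2 - 2 * l ^ 2 * msq q (x, t)) •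
          (l • offDiag (px q (x, t)))
        + ((3 * msq q (x, t) - 2 * l ^ 2) * symmPairing (q (x, t)) (px q (x, t))) •
          Xmat q l (x, t)
        + (-2 * I * l ^ 3 + 3 * I * l * msq q (x, t)) • (sigma3 * offDiag (px (px q) (x, t)))
        + (3 * I * l * symmPairing (q (x, t)) (px q (x, t))) • (sigma3 * offDiag (px q (x, t)))
        - (l ^ 2 * altPairing (q (x, t)) (px (px q) (x, t))) • sigma3
        - l • offDiag (px (px (px q)) (x, t)) := by
  have dq := hasDerivAt_px hq
  have dqx := hasDerivAt_px hqx
  have dm := hasDerivAt_msq hq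
  have dX := (((dm.fun_pow 2).const_mul (3 / 2)).const_add (4 * l ^ 4) |>.fun_sub
    (dm.const_mul (2 * l ^ 2))).fun_smul (hasDerivAt_Xmat l dq)
  have dQx := ((dm.const_mul (3 * I * l)).const_add (-2 * I * l ^ 3)).fun_smul
    ((hasDerivAt_offDiag dqx).const_mul sigma3)
  have dσ := ((hasDerivAt_altPairing dq dqx).const_mul (l ^ 2)).smul_const sigma3
  have dQxx := (hasDerivAt_offDiag (hasDerivAt_px hqxx)).const_smul l
  apply DxM_eq_of_hasDerivAt
  simp only [Tmat_apply]
  refine (((dX.fun_add dQx).fun_sub dσ).fun_sub dQxx).congr_deriv ?_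
  rw [altPairing_self]
  module

end Derivatives

/-- The left-hand side of the TOFKN equation. -/
def tofknResidual (q : ℝ × ℝ → ℂ) (p : ℝ × ℝ) : ℂ :=
  pt q p + px (px (px q)) p
    - 3 * I * px (fun p' => msq q p' * px q p') p
    - (3 / 2) * px (fun p' => (msq q p') ^ 2 * q p') p

/-- The left-hand side of the zero-curvature equation. -/
def laxCurvature (q : ℝ × ℝ → ℂ) (l : ℂ) (p : ℝ × ℝ) : Mat2 :=
  DtM (Xmat q l) p - DxM (Tmat q l) p + Xmat q l p * Tmat q l p - Tmat q l p * Xmat q l p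

section Curvature

variable {q : ℝ × ℝ → ℂ} {x t : ℝ}

lemma tofknResidual_eq (hq : DifferentiableAt ℝ (fun y => q (y, t)) x)
    (hqx : DifferentiableAt ℝ (fun y => px q (y, t)) x) :
    tofknResidual q (x, t) =
      pt q (x, t) + px (px (px q)) (x, t)
        - I * (3 * symmPairing (q (x, t)) (px q (x, t)) * px q (x, t)
          + 3 * msq q (x, t) * px (px q) (x, t))
        - (3 * msq q (x, t) * symmPairing (q (x, t)) (px q (x, t)) * q (x, t)
          + (3 / 2) * msq q (x, t) ^ 2 * px q (x, t)) := by
  have dm := hasDerivAt_msq hq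
  have cubic : px (fun p => msq q p * px q p) (x, t) = _ := (dm.mul (hasDerivAt_px hqx)).deriv
  have quintic : px (fun p => msq q p ^ 2 * q p) (x, t) = _ :=
    ((dm.fun_pow 2).mul (hasDerivAt_px hq)).deriv
  rw [tofknResidual, cubic, quintic]
  ring

lemma offDiag_tofknResidual (hq : DifferentiableAt ℝ (fun y => q (y, t)) x)
    (hqx : DifferentiableAt ℝ (fun y => px q (y, t)) x) :
    offDiag (tofknResidual q (x, t)) =
      offDiag (pt q (x, t)) + offDiag (px (px (px q)) (x, t))
        - (3 * I * symmPairing (q (x, t)) (px q (x, t))) • (sigma3 * offDiag (px q (x, t)))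
        - (3 * I * msq q (x, t)) • (sigma3 * offDiag (px (px q) (x, t)))
        - (3 * msq q (x, t) * symmPairing (q (x, t)) (px q (x, t))) • offDiag (q (x, t))
        - ((3 / 2) * msq q (x, t) ^ 2) • offDiag (px q (x, t)) := by
  rw [tofknResidual_eq hq hqx, map_sub, map_sub, map_add, offDiag_I_mul, map_add, map_add,
    offDiag_mul_of_conj_eq (by simp [conj_ofNat, conj_symmPairing]),
    offDiag_mul_of_conj_eq (by simp [conj_ofNat, conj_msq]),
    offDiag_mul_of_conj_eq (by simp [conj_ofNat, conj_symmPairing, conj_msq]),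
    offDiag_mul_of_conj_eq (by simp [conj_ofNat, conj_msq]), mul_add, mul_smul_comm, mul_smul_comm]
  module

theorem laxCurvature_eq_smul_offDiag (l : ℂ) (hqt : DifferentiableAt ℝ (fun s => q (x, s)) t)
    (hq : DifferentiableAt ℝ (fun y => q (y, t)) x)
    (hqx : DifferentiableAt ℝ (fun y => px q (y, t)) x)
    (hqxx : DifferentiableAt ℝ (fun y => px (px q) (y, t)) x) :
    laxCurvature q l (x, t) = l • offDiag (tofknResidual q (x, t)) := by
  have coeff_l_cubed : symmPairing (q (x, t)) (px q (x, t)) • offDiag (q (x, t)) +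
      altPairing (q (x, t)) (px q (x, t)) • (sigma3 * offDiag (q (x, t))) =
        (2 * msq q (x, t)) • offDiag (px q (x, t)) :=
    symmPairing_smul_add_altPairing_smul ..
  rw [laxCurvature, add_sub_assoc, ← Ring.lie_def, DtM_Xmat l hqt, DxM_Tmat l hq hqx hqxx,
    lie_Xmat_Tmat, Xmat_apply, offDiag_tofknResidual hq hqx]
  linear_combination (norm := module) (2 * l ^ 3) • coeff_l_cubed +
    I_sq • ((2 * l ^ 2 * (-2 * l ^ 3 + 3 * l * msq q (x, t))) • offDiag (px q (x, t)))

end Curvature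

theorem tofkn_iff_zero_curvature_general {q : ℝ × ℝ → ℂ}
    (hx : ∀ t, ContDiff ℝ 3 fun x => q (x, t)) (ht : ∀ x, Differentiable ℝ fun t => q (x, t))
    {Λ : Set ℂ} (hΛ : ∃ l ∈ Λ, l ≠ 0) :
    TOFKN q ↔ ∀ l ∈ Λ, ∀ p : ℝ × ℝ,
      DtM (Xmat q l) p - DxM (Tmat q l) p
        + Xmat q l p * Tmat q l p - Tmat q l p * Xmat q l p = 0 := by
  have hqx (t : ℝ) : ContDiff ℝ 2 fun x => px q (x, t) := contDiff_px (hx t)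
  have hqxx (t : ℝ) : ContDiff ℝ 1 fun x => px (px q) (x, t) := contDiff_px (hqx t)
  have curvature (l : ℂ) (p : ℝ × ℝ) : laxCurvature q l p = l • offDiag (tofknResidual q p) :=
    laxCurvature_eq_smul_offDiag l (ht p.1 p.2) ((hx p.2).differentiable (by simp) p.1)
      ((hqx p.2).differentiable (by simp) p.1) ((hqxx p.2).differentiable (by simp) p.1)
  change (∀ p, tofknResidual q p = 0) ↔ ∀ l ∈ Λ, ∀ p, laxCurvature q l p = 0
  simp only [curvature, smul_eq_zero, offDiag_eq_zero]
  obtain ⟨l, hl, hl₀⟩ := hΛ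
  exact ⟨fun h _ _ p => Or.inr (h p), fun h p => (h l hl p).resolve_left hl₀⟩

/-- a smooth `q` satisfies the TOFKN equation iff the zero-curvature equation
`∂ₜX − ∂ₓT + XT − TX = 0` holds for every `λ ∈ ℂ` and every `(x,t)`. -/
theorem tofkn_iff_zero_curvature (q : ℝ × ℝ → ℂ) (hq : ContDiff ℝ (⊤ : ℕ∞) q) :
    TOFKN q ↔ ∀ (l : ℂ) (p : ℝ × ℝ),
      DtM (Xmat q l) p - DxM (Tmat q l) p
        + Xmat q l p * Tmat q l p - Tmat q l p * Xmat q l p = 0 := by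
  have hx (t : ℝ) : ContDiff ℝ (⊤ : ℕ∞) fun x => q (x, t) := by fun_prop
  have ht (x : ℝ) : ContDiff ℝ (⊤ : ℕ∞) fun t => q (x, t) := by fun_prop
  simpa using tofkn_iff_zero_curvature_general (Λ := Set.univ)
    (fun t => contDiff_infty.1 (hx t) 3) (fun x => (ht x).differentiable (by simp))
    ⟨1, trivial, one_ne_zero⟩
end
end

section
/- Fix q0 > 0 and let z ∈ ℂ∖{0}. Then Im(k(z)·λ(z)) = ((|z|⁴ + q0⁴)/(2|z|⁴))·Re(z)·Im(z). Consequently: Im(k(z)λ(z)) > 0 if and only if Re(z)·Im(z) > 0; Im(k(z)λ(z)) < 0 if and only if Re(z)·Im(z) < 0; and Im(k(z)λ(z)) = 0 if and only if z lies on the real or the imaginary axis. -/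
noncomputable section

open Complex Matrix ComplexConjugate

/-- The constant boundary potential matrix `Q±`. -/
def Qb (qb : ℂ) : Mat2 := !![0, qb; -conj qb, 0]

/-- The asymptotic Lax matrix `X± = iλ²σ₃ + λQ±`. -/
def Xb (qb : ℂ) (l : ℂ) : Mat2 := (Complex.I * l ^ 2) • sigma3 + l • Qb qb

/-- The asymptotic Lax matrix `T± = (4λ⁴ + (3/2)q₀⁴ − 2λ²q₀²)·X±`. -/
def Tb (q0 : ℝ) (qb : ℂ) (l : ℂ) : Mat2 :=
  (4 * l ^ 4 + (3 / 2) * (q0 : ℂ) ^ 4 - 2 * l ^ 2 * (q0 : ℂ) ^ 2) • Xb qb l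

/-- The uniformization map `λ(z) = (z − q₀²/z)/2`. -/
def lamz (q0 : ℝ) (z : ℂ) : ℂ := (z - (q0 : ℂ) ^ 2 / z) / 2

/-- The uniformization map `k(z) = (z + q₀²/z)/2`. -/
def kz (q0 : ℝ) (z : ℂ) : ℂ := (z + (q0 : ℂ) ^ 2 / z) / 2

/-- The eigenvector matrix `Y±(z) = I + (i/z)σ₃Q±`. -/
def Yz (qb : ℂ) (z : ℂ) : Mat2 := 1 + (Complex.I / z) • (sigma3 * Qb qb)

/-- The phase `θ(z; x, t) = λk[x + (4λ⁴ + (3/2)q₀⁴ − 2λ²q₀²)t]`. -/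
def thetaz (q0 : ℝ) (z : ℂ) (p : ℝ × ℝ) : ℂ :=
  lamz q0 z * kz q0 z *
    ((p.1 : ℂ)
      + (4 * (lamz q0 z) ^ 4 + (3 / 2) * (q0 : ℂ) ^ 4 - 2 * (lamz q0 z) ^ 2 * (q0 : ℂ) ^ 2)
        * (p.2 : ℂ))

/- The product `k λ = (z² - q₀⁴ / z²) / 4` is a Joukowski-type map in `w = z²`. Since `w⁻¹` is a
positive multiple of `conj w`, the terms `w` and `-q₀⁴ / w` have imaginary parts of the same sign,
so they cannot cancel. -/

theorem sq_im (z : ℂ) : (z ^ 2).im = 2 * (z.re * z.im) := by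
  rw [sq, mul_im]
  ring

theorem sub_ofReal_div_im (r : ℝ) (w : ℂ) :
    (w - r / w).im = (1 + r / ‖w‖ ^ 2) * w.im := by
  rw [sub_im, div_eq_mul_inv, im_ofReal_mul, inv_im, normSq_eq_norm_sq]
  ring

theorem kz_mul_lamz (q0 : ℝ) (z : ℂ) :
    kz q0 z * lamz q0 z = (z ^ 2 - (q0 ^ 4 : ℝ) / z ^ 2) / 4 := by
  rw [kz, lamz]
  push_cast
  ring

theorem kz_mul_lamz_im (q0 : ℝ) {z : ℂ} (hz : z ≠ 0) :
    (kz q0 z * lamz q0 z).im =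
      ((‖z‖ ^ 4 + q0 ^ 4) / (2 * ‖z‖ ^ 4)) * (z.re * z.im) := by
  have hnorm : ‖z‖ ≠ 0 := norm_ne_zero_iff.mpr hz
  calc (kz q0 z * lamz q0 z).im
      = (1 + q0 ^ 4 / ‖z ^ 2‖ ^ 2) * (z ^ 2).im / 4 := by
        rw [kz_mul_lamz, div_ofNat_im, sub_ofReal_div_im]
    _ = (1 + q0 ^ 4 / (‖z‖ ^ 2) ^ 2) * (2 * (z.re * z.im)) / 4 := by rw [norm_pow, sq_im]
    _ = ((‖z‖ ^ 4 + q0 ^ 4) / (2 * ‖z‖ ^ 4)) * (z.re * z.im) := by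
        field_simp
        ring

/-- `Im(k(z)λ(z)) = ((|z|⁴ + q₀⁴)/(2|z|⁴))·Re z·Im z`, and the induced
sign characterizations of `Im(k(z)λ(z))`. -/
theorem im_k_lambda (q0 : ℝ) (hq0 : 0 < q0) (z : ℂ) (hz : z ≠ 0) :
    (kz q0 z * lamz q0 z).im
      = ((‖z‖ ^ 4 + q0 ^ 4) / (2 * ‖z‖ ^ 4)) * (z.re * z.im) ∧
    (0 < (kz q0 z * lamz q0 z).im ↔ 0 < z.re * z.im) ∧
    ((kz q0 z * lamz q0 z).im < 0 ↔ z.re * z.im < 0) ∧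
    ((kz q0 z * lamz q0 z).im = 0 ↔ (z.im = 0 ∨ z.re = 0)) := by
  have im_eq := kz_mul_lamz_im q0 hz
  have factor_pos : 0 < (‖z‖ ^ 4 + q0 ^ 4) / (2 * ‖z‖ ^ 4) := by positivity
  refine ⟨im_eq, ?_, ?_, ?_⟩
  · rw [im_eq, mul_pos_iff_of_pos_left factor_pos]
  · rw [im_eq, ← smul_eq_mul, smul_neg_iff_of_pos_left factor_pos]
  · rw [im_eq, mul_eq_zero_iff_left factor_pos.ne', mul_eq_zero, or_comm]
end
end
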